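/- Let C be a connected graph with minimum degree at least p (p ≥ 2) that contains no path on 2p+1 vertices. Then p+1 ≤ |V(C)| ≤ 2p and C contains a Hamiltonian path. -/

import Mathlib

/-- `G` contains a path on `k` vertices. -/
def containsPathOn {α : Type*} (G : SimpleGraph α) (k : ℕ) : Prop :=
  ∃ (u v : α) (w : G.Walk u v), w.IsPath ∧ w.length + 1 = k

theorem walk_of_chain {V : Type*} (C : SimpleGraph V) :
    ∀ (l : List V) (a : V), List.IsChain C.Adj (a :: l) →
      ∃ (v : V) (w : C.Walk a v), w.support = a :: l := by
  intro l
  induction l with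
  | nil => intro a _; exact ⟨a, SimpleGraph.Walk.nil, rfl⟩
  | cons b l ih =>
    intro a h
    rw [List.isChain_cons_cons] at h
    obtain ⟨v, w, hw⟩ := ih b h.2
    exact ⟨v, SimpleGraph.Walk.cons h.1 w, by simp [hw]⟩

theorem path_of_chain {V : Type*} (C : SimpleGraph V) (l : List V) (hl : l ≠ [])
    (hc : List.IsChain C.Adj l) (hn : l.Nodup) :
    ∃ (u v : V) (w : C.Walk u v), w.IsPath ∧ w.support = l := by
  cases l with
  | nil => exact absurd rfl hl
  | cons a l =>
    obtain ⟨v, w, hw⟩ := walk_of_chain C l a hc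
    exact ⟨a, v, w, (SimpleGraph.Walk.isPath_def w).2 (hw ▸ hn), hw⟩

/-- A cyclic chain with a vertex attached outside extends to a longer chain. -/
theorem extend_cycle {V : Type*} (C : SimpleGraph V) (l : List V)
    (hc : List.IsChain C.Adj l) (hn : l.Nodup)
    (hcl : ∀ x ∈ l.getLast?, ∀ y ∈ l.head?, C.Adj x y)
    (x y : V) (hx : x ∉ l) (hy : y ∈ l) (hxy : C.Adj x y) :
    ∃ l' : List V, List.IsChain C.Adj l' ∧ l'.Nodup ∧ l'.length = l.length + 1 := by
  obtain ⟨a, b, rfl⟩ := List.append_of_mem hy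
  refine ⟨x :: ((y :: b) ++ a), ?_, ?_, ?_⟩
  · rw [List.isChain_append] at hc
    have h1 : List.IsChain C.Adj ((y :: b) ++ a) := by
      rw [List.isChain_append]
      refine ⟨hc.2.1, hc.1, ?_⟩
      intro u hu v hv
      apply hcl
      · simp only [List.getLast?_append, hu]
        simp_all
      · simp_all
    rw [List.cons_append, List.isChain_cons_cons]
    exact ⟨hxy, h1⟩
  · have hp : (y :: b ++ a).Perm (a ++ y :: b) := List.perm_append_comm
    rw [List.nodup_cons, hp.nodup_iff, hp.mem_iff]
    exact ⟨hx, hn⟩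
  · simp; omega

theorem crossing {V : Type*} [Fintype V] [DecidableEq V]
    (C : SimpleGraph V) [DecidableRel C.Adj] (p : ℕ)
    (hdeg : ∀ v : V, p ≤ C.degree v) (l : List V) (hl : 0 < l.length) (hlen : l.length ≤ 2 * p)
    (hh : ∀ y, C.Adj l[0] y → y ∈ l)
    (ht : ∀ y, C.Adj (l[l.length - 1]) y → y ∈ l) :
    ∃ (i : ℕ) (hi : i + 1 < l.length), C.Adj l[0] l[i+1] ∧ C.Adj l[l.length - 1] l[i] := by
  let f : ℕ → V := fun i => l.getD i l[0]
  have hf : ∀ i (hi : i < l.length), f i = l[i] := fun i hi => by simp [f, hi]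
  let A := (Finset.range (l.length - 1)).filter fun i => C.Adj l[0] (f (i+1))
  let B := (Finset.range (l.length - 1)).filter fun i => C.Adj l[l.length - 1] (f i)
  have hA : p ≤ A.card := by
    refine (hdeg l[0]).trans ?_
    rw [← SimpleGraph.card_neighborFinset_eq_degree]
    refine (Finset.card_le_card (t := A.image fun i => f (i+1)) ?_).trans Finset.card_image_le
    intro y hy
    rw [SimpleGraph.mem_neighborFinset] at hy
    obtain ⟨j, hj, rfl⟩ := List.getElem_of_mem (hh y hy)
    rw [Finset.mem_image]
    rcases j with _ | j
    · exact absurd rfl hy.ne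
    · refine ⟨j, ?_, hf _ hj⟩
      simp only [A, Finset.mem_filter, Finset.mem_range]
      exact ⟨by omega, by rw [hf _ hj]; exact hy⟩
  have hB : p ≤ B.card := by
    refine (hdeg l[l.length - 1]).trans ?_
    rw [← SimpleGraph.card_neighborFinset_eq_degree]
    refine (Finset.card_le_card (t := B.image f) ?_).trans Finset.card_image_le
    intro y hy
    rw [SimpleGraph.mem_neighborFinset] at hy
    obtain ⟨j, hj, rfl⟩ := List.getElem_of_mem (ht y hy)
    rw [Finset.mem_image]
    by_cases hjl : j = l.length - 1
    · subst hjl; exact absurd rfl hy.ne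
    · refine ⟨j, ?_, hf _ hj⟩
      simp only [B, Finset.mem_filter, Finset.mem_range]
      exact ⟨by omega, by rw [hf _ hj]; exact hy⟩
  have hne : ¬ Disjoint A B := by
    intro hd
    have h1 := Finset.card_union_of_disjoint hd
    have h2 : (A ∪ B).card ≤ (Finset.range (l.length - 1)).card :=
      Finset.card_le_card (Finset.union_subset (Finset.filter_subset _ _)
        (Finset.filter_subset _ _))
    rw [Finset.card_range] at h2
    omega
  rw [Finset.not_disjoint_iff] at hne
  obtain ⟨i, hiA, hiB⟩ := hne
  simp only [A, B, Finset.mem_filter, Finset.mem_range] at hiA hiB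
  have hi : i + 1 < l.length := by omega
  refine ⟨i, hi, ?_, ?_⟩
  · rw [← hf (i+1) hi]; exact hiA.2
  · rw [← hf i (by omega)]; exact hiB.2

theorem component_structure_odd_path {V : Type*} [Fintype V]
    (C : SimpleGraph V) [DecidableRel C.Adj] (p : ℕ) (hp : 2 ≤ p)
    (hconn : C.Connected) (hdeg : ∀ v : V, p ≤ C.degree v)
    (hfree : ¬ containsPathOn C (2 * p + 1)) :
    p + 1 ≤ Fintype.card V ∧ Fintype.card V ≤ 2 * p ∧
      ∃ (u v : V) (w : C.Walk u v), w.IsPath ∧ ∀ x : V, x ∈ w.support := by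
  classical
  obtain ⟨v₀⟩ := hconn.nonempty
  -- chains have at most 2p vertices
  have hbound : ∀ l : List V, List.IsChain C.Adj l → l.Nodup → l.length ≤ 2 * p := by
    intro l hc hn
    by_contra hlt
    have hlen : (l.take (2 * p + 1)).length = 2 * p + 1 := by
      rw [List.length_take]; omega
    obtain ⟨u, v, w, hw, hs⟩ := path_of_chain C (l.take (2 * p + 1))
      (by intro h; rw [h] at hlen; simp at hlen) (hc.take _)
      (hn.sublist (List.take_sublist _ _))
    exact hfree ⟨u, v, w, hw, by rw [← SimpleGraph.Walk.length_support, hs, hlen]⟩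
  -- a longest chain
  let P : ℕ → Prop := fun k => ∃ l : List V, List.IsChain C.Adj l ∧ l.Nodup ∧ l.length = k
  have hP1 : P 1 := ⟨[v₀], by simp, by simp, rfl⟩
  have hPn : P (Nat.findGreatest P (2 * p)) := Nat.findGreatest_spec (m := 1) (by omega) hP1
  have hn1 : 1 ≤ Nat.findGreatest P (2 * p) := Nat.le_findGreatest (by omega) hP1
  obtain ⟨l, hc, hn, hlen⟩ := hPn
  have hmax : ¬ ∃ l' : List V, List.IsChain C.Adj l' ∧ l'.Nodup ∧ l'.length = l.length + 1 := by
    rintro ⟨l', h1, h2, h3⟩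
    have h4 : l'.length ≤ Nat.findGreatest P (2 * p) :=
      Nat.le_findGreatest (hbound l' h1 h2) ⟨l', h1, h2, rfl⟩
    omega
  have hl0 : 0 < l.length := by omega
  have hlne : l ≠ [] := List.length_pos_iff.1 hl0
  have hl2 := hbound l hc hn
  have hall : ∀ x, x ∈ l := by
    by_contra hx
    push Not at hx
    obtain ⟨z, hz⟩ := hx
    obtain ⟨i, hi, h1, h2⟩ := crossing C p hdeg l hl0 hl2
      (by
        intro y hy
        by_contra hyl
        refine hmax ⟨y :: l, ?_, List.nodup_cons.2 ⟨hyl, hn⟩, rfl⟩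
        rw [List.isChain_cons]
        refine ⟨?_, hc⟩
        intro u hu
        rw [List.head?_eq_getElem?, List.getElem?_eq_getElem hl0] at hu
        simp only [Option.mem_def, Option.some.injEq] at hu
        exact hu ▸ hy.symm)
      (by
        intro y hy
        by_contra hyl
        refine hmax ⟨l ++ [y], ?_, ?_, by simp⟩
        · rw [List.isChain_append]
          refine ⟨hc, by simp, ?_⟩
          intro u hu v hv
          rw [List.getLast?_eq_getElem?, List.getElem?_eq_getElem (by omega)] at hu
          simp only [Option.mem_def, Option.some.injEq, List.head?_cons] at hu hv
          subst hu; subst hv; exact hy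
        · have hpm : (l ++ [y]).Perm (y :: l) := List.perm_append_singleton y l
          rw [hpm.nodup_iff]
          exact List.nodup_cons.2 ⟨hyl, hn⟩)
    -- the cyclic reordering
    let m := l.take (i+1) ++ (l.drop (i+1)).reverse
    have hpm : m.Perm l := by
      have : m.Perm (l.take (i+1) ++ l.drop (i+1)) :=
        (List.reverse_perm _).append_left _
      rwa [List.take_append_drop] at this
    have hd : l.drop (i+1) ≠ [] := by
      intro h
      rw [List.drop_eq_nil_iff] at h; omega
    have hmc : List.IsChain C.Adj m := by
      rw [List.isChain_append]
      refine ⟨hc.take _, ?_, ?_⟩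
      · rw [List.isChain_reverse]
        exact (hc.drop _).imp fun _ _ h => h.symm
      · intro u hu v hv
        rw [List.head?_reverse, List.getLast?_drop, if_neg (by omega), List.getLast?_eq_getElem?,
          List.getElem?_eq_getElem (by omega)] at hv
        rw [List.getLast?_eq_getElem?, List.length_take, min_eq_left (by omega),
          Nat.add_sub_cancel, List.getElem?_take_of_lt (by omega),
          List.getElem?_eq_getElem (by omega)] at hu
        simp only [Option.mem_def, Option.some.injEq] at hu hv
        subst hu; subst hv; exact h2.symm
    have hcl : ∀ x ∈ m.getLast?, ∀ y ∈ m.head?, C.Adj x y := by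
      intro u hu v hv
      have e1 : m.getLast? = some l[i+1] := by
        simp only [m]
        rw [List.getLast?_append, List.getLast?_reverse, List.head?_drop,
          List.getElem?_eq_getElem hi]
        rfl
      have e2 : m.head? = some l[0] := by
        simp only [m]
        rw [List.head?_append, List.head?_take, if_neg (by omega), List.head?_eq_getElem?,
          List.getElem?_eq_getElem hl0]
        rfl
      rw [e1] at hu
      rw [e2] at hv
      simp only [Option.mem_def, Option.some.injEq] at hu hv
      subst hu; subst hv; exact h1.symm
    -- an edge leaving the path
    obtain ⟨w⟩ := hconn.preconnected l[0] z
    obtain ⟨d, _, hd1, hd2⟩ := w.exists_boundary_dart {x | x ∈ l} (List.getElem_mem hl0) hz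
    obtain ⟨l', a1, a2, a3⟩ := extend_cycle C m hmc (hpm.nodup_iff.2 hn) hcl d.snd d.fst
      (fun h => hd2 (hpm.mem_iff.1 h)) (hpm.mem_iff.2 hd1) d.adj.symm
    exact hmax ⟨l', a1, a2, by rw [a3, hpm.length_eq]⟩
  refine ⟨?_, ?_, ?_⟩
  · have := hdeg v₀
    have := C.degree_lt_card_verts v₀
    omega
  · refine le_trans ?_ hl2
    rw [← Finset.card_univ]
    refine (Finset.card_le_card (t := l.toFinset) ?_).trans (List.toFinset_card_le l)
    intro x _
    simpa using hall x
  · obtain ⟨u, v, w, hw, hs⟩ := path_of_chain C l hlne hc hn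
    exact ⟨u, v, w, hw, fun x => hs ▸ hall x⟩
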